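/- Let ν be the standard Gaussian measure on ℝ^d and B₁, ..., B_K a measurable partition of ℝ^d with ν(B_i) ≤ 1/2 for all i. Then for every η ≥ 0, the measure of points within ℓ₂-distance η of a different cell satisfies ν({z : dist(z, ∪_{j ≠ i(z)} B_j) ≤ η}) ≥ 1 - √(π/2)·e^{-η²/2}, where i(z) is the index of the cell containing z. -/

import Mathlib

open Real Set MeasureTheory ProbabilityTheory

/-- The standard normal cumulative distribution function. -/
noncomputable def Phi (x : ℝ) : ℝ :=
  (Real.sqrt (2 * π))⁻¹ * ∫ u in Set.Iic x, Real.exp (-u ^ 2 / 2)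

/-- The inverse of the standard normal cdf. -/
noncomputable def PhiInv : ℝ → ℝ := Function.invFun Phi

/-- The standard Gaussian measure `N(0, I_d)` on `ℝ^d`. -/
noncomputable def stdGaussian (d : ℕ) : Measure (Fin d → ℝ) :=
  Measure.pi fun _ => gaussianReal 0 1

/-- The Euclidean (ℓ₂) norm on `ℝ^d`. -/
noncomputable def l2 {d : ℕ} (z : Fin d → ℝ) : ℝ := Real.sqrt (∑ i, z i ^ 2)

/-- The ℓ₂ distance from a point to a set. -/
noncomputable def distSet {d : ℕ} (z : Fin d → ℝ) (A : Set (Fin d → ℝ)) : ℝ :=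
  sInf {t | ∃ z' ∈ A, t = l2 (z - z')}

/-!
The proof is Bobkov's functional route to the Gaussian isoperimetric inequality. For the profile
`I = φ ∘ Φ⁻¹`, the relation `I * I'' = -1` and the convexity of `(I')²` give a two-point inequality.
It tensorises to the discrete cube, and the central limit theorem turns it into
`I (∫ f) ≤ ∫ √(I(f)² + ‖∇f‖²)` for the Gaussian measure. Applied to `f = Φ(l(s - D))` with `D`
1-Lipschitz, this bounds the `s`-derivative of `Φ⁻¹(∫ f)` below by `l / √(1 + l²)`, and `l → ∞` with
`D` the distance to a set `A` gives `Φ(Φ⁻¹(ν A) + η) ≤ ν {dist(·, A) ≤ η}`.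

Since `Φ(x - η) ≤ exp(-η²/2) Φ(x)` for `x ≤ 0`, enlarging a set of measure at least `1/2` by `η`
shrinks the measure of its complement by the factor `exp(-η²/2)`. For the union of all cells but
`B i`, that complement is the part of `B i` that no other cell meets, and these parts are disjoint.
-/

open Filter Topology Metric
open scoped NNReal BigOperators BoundedContinuousFunction InnerProductSpace

local notation "φ" => gaussianPDFReal 0 1

/-! ### The standard normal density and distribution function -/

lemma continuous_gaussianPDFReal (μ : ℝ) (v : ℝ≥0) : Continuous (gaussianPDFReal μ v) := by
  rw [gaussianPDFReal_def]
  fun_prop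

lemma hasDerivAt_gaussianPDFReal (μ : ℝ) (v : ℝ≥0) (x : ℝ) :
    HasDerivAt (gaussianPDFReal μ v) (-(x - μ) / v * gaussianPDFReal μ v x) x := by
  have h : HasDerivAt (fun y ↦ -(y - μ) ^ 2 / (2 * v)) (-(x - μ) / v) x := by
    convert! ((((hasDerivAt_id x).sub_const μ).pow 2).neg.div_const (2 * (v : ℝ))) using 1
    simp only [id]
    ring
  rw [gaussianPDFReal_def]
  convert! h.exp.const_mul (√(2 * π * v))⁻¹ using 1
  ring

lemma gaussianPDFReal_le_of_abs_sub_le {μ x y : ℝ} (v : ℝ≥0) (h : |x - μ| ≤ |y - μ|) :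
    gaussianPDFReal μ v y ≤ gaussianPDFReal μ v x := by
  have := sq_le_sq.2 h
  rw [gaussianPDFReal, gaussianPDFReal]
  gcongr

lemma gaussianPDFReal_le_mean (μ : ℝ) (v : ℝ≥0) (x : ℝ) :
    gaussianPDFReal μ v x ≤ gaussianPDFReal μ v μ :=
  gaussianPDFReal_le_of_abs_sub_le v (by simp)

lemma gaussianPDFReal_zero_neg (v : ℝ≥0) (x : ℝ) :
    gaussianPDFReal 0 v (-x) = gaussianPDFReal 0 v x := by
  simp [gaussianPDFReal]

lemma gaussianPDFReal_zero_one_pos (x : ℝ) : 0 < φ x := gaussianPDFReal_pos 0 1 x one_ne_zero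

lemma Phi_eq_integral (x : ℝ) : Phi x = ∫ u in Iic x, φ u := by
  simp [Phi, gaussianPDFReal, integral_const_mul]

lemma Phi_eq_cdf : Phi = cdf (gaussianReal 0 1) := by
  ext x
  rw [cdf_eq_real, Measure.real, gaussianReal_apply_eq_integral 0 one_ne_zero,
    ENNReal.toReal_ofReal (integral_nonneg fun y ↦ gaussianPDFReal_nonneg 0 1 y), Phi_eq_integral]

lemma hasDerivAt_Phi (x : ℝ) : HasDerivAt Phi (φ x) x := by
  have h : Phi = fun y ↦ Phi 0 + ∫ u in (0 : ℝ)..y, φ u := by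
    ext y
    have hφ := integrable_gaussianPDFReal 0 1
    rw [← intervalIntegral.integral_Iic_sub_Iic hφ.integrableOn hφ.integrableOn,
      ← Phi_eq_integral, ← Phi_eq_integral, add_sub_cancel]
  rw [h]
  exact ((continuous_gaussianPDFReal 0 1).integral_hasStrictDerivAt 0 x).hasDerivAt.const_add _

lemma continuous_Phi : Continuous Phi :=
  continuous_iff_continuousAt.2 fun x ↦ (hasDerivAt_Phi x).continuousAt

lemma contDiff_one_Phi : ContDiff ℝ 1 Phi :=
  contDiff_one_iff_deriv.2 ⟨fun x ↦ (hasDerivAt_Phi x).differentiableAt, by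
    simpa only [funext fun x ↦ (hasDerivAt_Phi x).deriv] using continuous_gaussianPDFReal 0 1⟩

lemma strictMono_Phi : StrictMono Phi :=
  strictMono_of_deriv_pos fun x ↦ (hasDerivAt_Phi x).deriv ▸ gaussianPDFReal_zero_one_pos x

lemma tendsto_Phi_atTop : Tendsto Phi atTop (𝓝 1) := Phi_eq_cdf ▸ tendsto_cdf_atTop _

lemma tendsto_Phi_atBot : Tendsto Phi atBot (𝓝 0) := Phi_eq_cdf ▸ tendsto_cdf_atBot _

lemma Phi_mem_Ioo (x : ℝ) : Phi x ∈ Ioo (0 : ℝ) 1 :=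
  ⟨(strictMono_Phi.monotone.le_of_tendsto tendsto_Phi_atBot (x - 1)).trans_lt
    (strictMono_Phi (sub_one_lt x)),
  (strictMono_Phi (lt_add_one x)).trans_le
    (strictMono_Phi.monotone.ge_of_tendsto tendsto_Phi_atTop (x + 1))⟩

lemma Phi_neg (x : ℝ) : Phi (-x) = 1 - Phi x := by
  have h : Phi (-x) = ∫ u in Ioi x, φ u := by
    rw [Phi_eq_integral, ← integral_comp_neg_Ioi]
    simp only [gaussianPDFReal_zero_neg]
  rw [h, ← compl_Iic, setIntegral_compl measurableSet_Iic (integrable_gaussianPDFReal 0 1),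
    integral_gaussianPDFReal_eq_one 0 one_ne_zero, ← Phi_eq_integral]

lemma Phi_zero : Phi 0 = 1 / 2 := by
  have := Phi_neg 0
  rw [neg_zero] at this
  linarith

lemma gaussianPDFReal_zero_one_sub_le {u η : ℝ} (hu : u ≤ 0) (hη : 0 ≤ η) :
    φ (u - η) ≤ exp (-η ^ 2 / 2) * φ u := by
  simp only [gaussianPDFReal, sub_zero, NNReal.coe_one, mul_one]
  rw [mul_left_comm, ← exp_add]
  gcongr
  linarith [mul_nonneg (neg_nonneg.2 hu) hη]

lemma Phi_sub_le {x η : ℝ} (hx : x ≤ 0) (hη : 0 ≤ η) :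
    Phi (x - η) ≤ exp (-η ^ 2 / 2) * Phi x := by
  have hφ := integrable_gaussianPDFReal 0 1
  have h : Phi (x - η) = ∫ u in Iic x, φ (u - η) := by
    rw [Phi_eq_integral, ← (measurePreserving_sub_right volume η).setIntegral_preimage_emb
      (measurableEmbedding_subRight η), preimage_sub_const_Iic, sub_add_cancel]
  rw [h, Phi_eq_integral, ← integral_const_mul]
  exact setIntegral_mono_on (hφ.comp_sub_right η).integrableOn (hφ.const_mul _).integrableOn
    measurableSet_Iic fun u hu ↦ gaussianPDFReal_zero_one_sub_le (le_trans hu hx) hη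

/-! ### The normal quantile function and the Gaussian isoperimetric profile -/

lemma PhiInv_Phi (x : ℝ) : PhiInv (Phi x) = x :=
  Function.leftInverse_invFun strictMono_Phi.injective x

lemma range_Phi : range Phi = Ioo 0 1 := by
  refine (range_subset_iff.2 Phi_mem_Ioo).antisymm fun y hy ↦ ?_
  obtain ⟨a, ha⟩ := (tendsto_Phi_atBot.eventually_lt_const hy.1).exists
  obtain ⟨b, hb⟩ := (tendsto_Phi_atTop.eventually_const_lt hy.2).exists
  exact mem_range_of_exists_le_of_exists_ge continuous_Phi ⟨a, ha.le⟩ ⟨b, hb.le⟩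

lemma Phi_PhiInv {y : ℝ} (hy : y ∈ Ioo (0 : ℝ) 1) : Phi (PhiInv y) = y :=
  Function.invFun_eq (range_Phi ▸ hy : y ∈ range Phi)

lemma strictMonoOn_PhiInv : StrictMonoOn PhiInv (Ioo 0 1) := fun x hx y hy hxy ↦ by
  rwa [← strictMono_Phi.lt_iff_lt, Phi_PhiInv hx, Phi_PhiInv hy]

lemma PhiInv_one_sub {y : ℝ} (hy : y ∈ Ioo (0 : ℝ) 1) : PhiInv (1 - y) = -PhiInv y := by
  rw [← Phi_PhiInv hy, ← Phi_neg, PhiInv_Phi, PhiInv_Phi]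

lemma continuousAt_PhiInv {y : ℝ} (hy : y ∈ Ioo (0 : ℝ) 1) : ContinuousAt PhiInv y := by
  refine strictMonoOn_PhiInv.continuousAt_of_image_mem_nhds (Ioo_mem_nhds hy.1 hy.2) ?_
  have himage : PhiInv '' Ioo 0 1 = univ :=
    eq_univ_of_forall fun x ↦ ⟨Phi x, Phi_mem_Ioo x, PhiInv_Phi x⟩
  simp [himage]

lemma hasDerivAt_PhiInv {y : ℝ} (hy : y ∈ Ioo (0 : ℝ) 1) :
    HasDerivAt PhiInv (φ (PhiInv y))⁻¹ y :=
  (hasDerivAt_Phi _).of_local_left_inverse (continuousAt_PhiInv hy)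
    (gaussianPDFReal_zero_one_pos _).ne'
    (by filter_upwards [Ioo_mem_nhds hy.1 hy.2] with z hz using Phi_PhiInv hz)

/-- The Gaussian isoperimetric profile `φ ∘ Φ⁻¹`: the boundary measure of a half-space of Gaussian
measure `y`. Outside `(0, 1)`, where `PhiInv` is arbitrary, its values carry no meaning. -/
noncomputable def gaussianProfile (y : ℝ) : ℝ := φ (PhiInv y)

lemma gaussianProfile_pos (y : ℝ) : 0 < gaussianProfile y := gaussianPDFReal_zero_one_pos _

lemma gaussianProfile_Phi (x : ℝ) : gaussianProfile (Phi x) = φ x := by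
  rw [gaussianProfile, PhiInv_Phi]

lemma gaussianProfile_le (y : ℝ) : gaussianProfile y ≤ φ 0 :=
  gaussianPDFReal_le_mean 0 1 _

lemma gaussianProfile_one_sub {y : ℝ} (hy : y ∈ Ioo (0 : ℝ) 1) :
    gaussianProfile (1 - y) = gaussianProfile y := by
  rw [gaussianProfile, PhiInv_one_sub hy, gaussianPDFReal_zero_neg, gaussianProfile]

lemma hasDerivAt_gaussianProfile {y : ℝ} (hy : y ∈ Ioo (0 : ℝ) 1) :
    HasDerivAt gaussianProfile (-PhiInv y) y := by
  convert! (hasDerivAt_gaussianPDFReal 0 1 (PhiInv y)).comp y (hasDerivAt_PhiInv hy) using 1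
  have := (gaussianPDFReal_zero_one_pos (PhiInv y)).ne'
  simp [this]

lemma continuousOn_gaussianProfile : ContinuousOn gaussianProfile (Ioo 0 1) := fun _ hy ↦
  (hasDerivAt_gaussianProfile hy).continuousAt.continuousWithinAt

lemma hasDerivAt_gaussianProfile_sq {y : ℝ} (hy : y ∈ Ioo (0 : ℝ) 1) :
    HasDerivAt (fun z ↦ gaussianProfile z ^ 2) (-2 * PhiInv y * gaussianProfile y) y := by
  convert! (hasDerivAt_gaussianProfile hy).pow 2 using 1
  ring

lemma hasDerivAt_PhiInv_mul_gaussianProfile {y : ℝ} (hy : y ∈ Ioo (0 : ℝ) 1) :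
    HasDerivAt (fun z ↦ -2 * PhiInv z * gaussianProfile z) (2 * (PhiInv y ^ 2 - 1)) y := by
  convert! ((hasDerivAt_PhiInv hy).const_mul (-2)).mul (hasDerivAt_gaussianProfile hy) using 1
  have := (gaussianProfile_pos y).ne'
  rw [← gaussianProfile]
  field_simp
  ring

lemma monotone_div_gaussianPDFReal : Monotone fun x ↦ x / φ x := by
  have h (x : ℝ) : HasDerivAt (fun x ↦ x / φ x) ((1 + x ^ 2) / φ x) x := by
    have := (gaussianPDFReal_zero_one_pos x).ne'
    convert! (hasDerivAt_id x).div (hasDerivAt_gaussianPDFReal 0 1 x) this using 1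
    simp only [id, sub_zero, NNReal.coe_one, div_one]
    field_simp
    ring
  refine monotone_of_hasDerivAt_nonneg h fun x ↦ ?_
  have := gaussianPDFReal_zero_one_pos x
  positivity

lemma convexOn_PhiInv_sq : ConvexOn ℝ (Ioo 0 1) fun y ↦ PhiInv y ^ 2 := by
  have h (y : ℝ) (hy : y ∈ Ioo (0 : ℝ) 1) :
      HasDerivAt (fun z ↦ PhiInv z ^ 2) (2 * (PhiInv y / φ (PhiInv y))) y := by
    convert! (hasDerivAt_PhiInv hy).pow 2 using 1
    ring
  refine MonotoneOn.convexOn_of_deriv (convex_Ioo 0 1)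
    (fun y hy ↦ (h y hy).continuousAt.continuousWithinAt) ?_ ?_
  all_goals rw [interior_Ioo]
  · exact fun y hy ↦ (h y hy).differentiableAt.differentiableWithinAt
  · intro y hy z hz hyz
    rw [(h y hy).deriv, (h z hz).deriv]
    exact mul_le_mul_of_nonneg_left (monotone_div_gaussianPDFReal
      (strictMonoOn_PhiInv.monotoneOn hy hz hyz)) zero_le_two

/-! ### Bobkov's two-point inequality -/

lemma add_mul_sub_le_of_hasDerivAt2_nonneg {g g' g'' : ℝ → ℝ} {a b : ℝ} (hab : a ≤ b)
    (hg : ∀ y ∈ Icc a b, HasDerivAt g (g' y) y) (hg' : ∀ y ∈ Icc a b, HasDerivAt g' (g'' y) y)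
    (hg'' : ∀ y ∈ Icc a b, 0 ≤ g'' y) : g a + g' a * (b - a) ≤ g b := by
  have hconv : ConvexOn ℝ (Icc a b) g := by
    refine convexOn_of_hasDerivWithinAt2_nonneg (convex_Icc a b)
      (fun y hy ↦ (hg y hy).continuousAt.continuousWithinAt)
      (fun y hy ↦ (hg y (interior_subset hy)).hasDerivWithinAt)
      (fun y hy ↦ (hg' y (interior_subset hy)).hasDerivWithinAt)
      (fun y hy ↦ hg'' y (interior_subset hy))
  rcases hab.eq_or_lt with rfl | hlt
  · simp
  · have hslope := hconv.le_slope_of_hasDerivAt (left_mem_Icc.2 hab) (right_mem_Icc.2 hab) hlt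
      (hg a (left_mem_Icc.2 hab))
    rw [slope_def_field, le_div_iff₀ (sub_pos.2 hlt)] at hslope
    linarith

section TwoPoint

variable {c x : ℝ}

lemma abs_PhiInv_add_le (hx : 0 ≤ x) (hxc : x < c) (hc : c ≤ 1 / 2) :
    |PhiInv (c + x)| ≤ |PhiInv (c - x)| := by
  have hleft : c - x ∈ Ioo (0 : ℝ) 1 := ⟨by linarith, by linarith⟩
  have hright : c + x ∈ Ioo (0 : ℝ) 1 := ⟨by linarith, by linarith⟩
  have hrefl : 1 - (c - x) ∈ Ioo (0 : ℝ) 1 := ⟨by linarith, by linarith⟩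
  have hlower := strictMonoOn_PhiInv.monotoneOn hleft hright (by linarith)
  have hupper := strictMonoOn_PhiInv.monotoneOn hright hrefl (by linarith)
  rw [PhiInv_one_sub hleft] at hupper
  exact (abs_le.2 ⟨by linarith, hupper⟩).trans (neg_le_abs _)

lemma gaussianProfile_sub_le_gaussianProfile_add (hx : 0 ≤ x) (hxc : x < c) (hc : c ≤ 1 / 2) :
    gaussianProfile (c - x) ≤ gaussianProfile (c + x) :=
  gaussianPDFReal_le_of_abs_sub_le 1 (by simpa using abs_PhiInv_add_le hx hxc hc)

lemma gaussianProfile_sq_add_sub_sq_le (hx : 0 ≤ x) (hxc : x < c) (hc : c ≤ 1 / 2) :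
    gaussianProfile (c + x) ^ 2 - gaussianProfile (c - x) ^ 2
      ≤ -4 * PhiInv c * gaussianProfile c * x := by
  have hsub (y) (hy : y ∈ Icc 0 x) : c - y ∈ Ioo (0 : ℝ) 1 :=
    ⟨by linarith [hy.2], by linarith [hy.1]⟩
  have hadd (y) (hy : y ∈ Icc 0 x) : c + y ∈ Ioo (0 : ℝ) 1 :=
    ⟨by linarith [hy.1], by linarith [hy.2]⟩
  have := add_mul_sub_le_of_hasDerivAt2_nonneg hx
    (fun y hy ↦ ((hasDerivAt_gaussianProfile_sq (hsub y hy)).comp_const_sub c y).sub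
      ((hasDerivAt_gaussianProfile_sq (hadd y hy)).comp_const_add c y))
    (fun y hy ↦ ((hasDerivAt_PhiInv_mul_gaussianProfile (hsub y hy)).comp_const_sub c y).neg.sub
      ((hasDerivAt_PhiInv_mul_gaussianProfile (hadd y hy)).comp_const_add c y))
    (fun y hy ↦ by
      have := sq_le_sq.2 (abs_PhiInv_add_le hy.1 (hy.2.trans_lt hxc) hc)
      linarith)
  simp only [add_zero, sub_zero, sub_self, zero_add, Pi.sub_apply] at this
  linarith

lemma two_mul_gaussianProfile_sq_le (hx : 0 ≤ x) (hxc : x < c) (hc : c ≤ 1 / 2) :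
    2 * gaussianProfile c ^ 2 + 2 * PhiInv c ^ 2 * x ^ 2
      ≤ gaussianProfile (c + x) ^ 2 + gaussianProfile (c - x) ^ 2 + 2 * x ^ 2 := by
  have hsub (y) (hy : y ∈ Icc 0 x) : c - y ∈ Ioo (0 : ℝ) 1 :=
    ⟨by linarith [hy.2], by linarith [hy.1]⟩
  have hadd (y) (hy : y ∈ Icc 0 x) : c + y ∈ Ioo (0 : ℝ) 1 :=
    ⟨by linarith [hy.1], by linarith [hy.2]⟩
  have hquad (y : ℝ) : HasDerivAt (fun z ↦ 2 * (PhiInv c ^ 2 - 1) * z ^ 2)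
      (2 * (PhiInv c ^ 2 - 1) * (2 * y)) y := by
    simpa using (hasDerivAt_pow 2 y).const_mul (2 * (PhiInv c ^ 2 - 1))
  have := add_mul_sub_le_of_hasDerivAt2_nonneg hx
    (fun y hy ↦ (((hasDerivAt_gaussianProfile_sq (hadd y hy)).comp_const_add c y).add
      ((hasDerivAt_gaussianProfile_sq (hsub y hy)).comp_const_sub c y)).sub (hquad y))
    (fun y hy ↦ (((hasDerivAt_PhiInv_mul_gaussianProfile (hadd y hy)).comp_const_add c y).add
      ((hasDerivAt_PhiInv_mul_gaussianProfile (hsub y hy)).comp_const_sub c y).neg).sub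
      (((hasDerivAt_id y).const_mul 2).const_mul (2 * (PhiInv c ^ 2 - 1))))
    (fun y hy ↦ by
      have := convexOn_PhiInv_sq.2 (hadd y hy) (hsub y hy) one_half_pos.le one_half_pos.le
        (add_halves 1)
      simp only [smul_eq_mul] at this
      rw [show 1 / 2 * (c + y) + 1 / 2 * (c - y) = c by ring] at this
      linarith)
  simp only [add_zero, sub_zero, Pi.sub_apply, Pi.add_apply] at this
  linarith

lemma two_mul_le_add_of_sq_sub_sq_le {α β γ : ℝ} (hα : 0 ≤ α) (hβ : 0 ≤ β)
    (h : (α ^ 2 - β ^ 2) ^ 2 ≤ 8 * γ ^ 2 * (α ^ 2 + β ^ 2 - 2 * γ ^ 2)) : 2 * γ ≤ α + β := by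
  by_contra! hlt
  have hsum : 0 < 4 * γ ^ 2 - (α + β) ^ 2 := by nlinarith
  have hprod : 0 ≤ (4 * γ ^ 2 - (α + β) ^ 2) * ((α - β) ^ 2 - 4 * γ ^ 2) := by nlinarith
  have hdiff := nonneg_of_mul_nonneg_right hprod hsum
  nlinarith [mul_nonneg hα hβ]

/-- After squaring, the claim compares the parts of `gaussianProfile ^ 2` that are odd and even
about `c`. -/
lemma two_mul_gaussianProfile_le (hx : 0 ≤ x) (hxc : x < c) (hc : c ≤ 1 / 2) :
    2 * gaussianProfile c ≤
      √(gaussianProfile (c + x) ^ 2 + x ^ 2) + √(gaussianProfile (c - x) ^ 2 + x ^ 2) := by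
  refine two_mul_le_add_of_sq_sub_sq_le (sqrt_nonneg _) (sqrt_nonneg _) ?_
  rw [sq_sqrt (by positivity), sq_sqrt (by positivity)]
  have hodd_nonneg : 0 ≤ gaussianProfile (c + x) ^ 2 - gaussianProfile (c - x) ^ 2 :=
    sub_nonneg.2 (pow_le_pow_left₀ (gaussianProfile_pos _).le
      (gaussianProfile_sub_le_gaussianProfile_add hx hxc hc) 2)
  have hodd := pow_le_pow_left₀ hodd_nonneg (gaussianProfile_sq_add_sub_sq_le hx hxc hc) 2
  have heven := mul_le_mul_of_nonneg_left (two_mul_gaussianProfile_sq_le hx hxc hc)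
    (by positivity : 0 ≤ 8 * gaussianProfile c ^ 2)
  linarith

end TwoPoint

lemma two_mul_gaussianProfile_midpoint_le {a b : ℝ} (ha : a ∈ Ioo (0 : ℝ) 1)
    (hb : b ∈ Ioo (0 : ℝ) 1) :
    2 * gaussianProfile ((a + b) / 2) ≤
      √(gaussianProfile a ^ 2 + ((a - b) / 2) ^ 2)
        + √(gaussianProfile b ^ 2 + ((a - b) / 2) ^ 2) := by
  wlog hab : b ≤ a generalizing a b
  · have := this hb ha (le_of_not_ge hab)
    rw [add_comm b a, add_comm (√_)] at this
    convert this using 4 <;> ring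
  wlog hc : (a + b) / 2 ≤ 1 / 2 generalizing a b
  · have := this (Ioo.one_sub_mem hb) (Ioo.one_sub_mem ha) (by linarith) (by linarith)
    rw [gaussianProfile_one_sub ha, gaussianProfile_one_sub hb, add_comm (√_),
      show (1 - b + (1 - a)) / 2 = 1 - (a + b) / 2 by ring, gaussianProfile_one_sub
        ⟨by linarith [ha.1, hb.1], by linarith [ha.2, hb.2]⟩] at this
    convert this using 4 <;> ring
  have := two_mul_gaussianProfile_le (c := (a + b) / 2) (x := (a - b) / 2) (by linarith)
    (by linarith [hb.1]) hc
  rwa [show (a + b) / 2 + (a - b) / 2 = a by ring, show (a + b) / 2 - (a - b) / 2 = b by ring]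
    at this

/-! ### Bobkov's inequality on the discrete cube -/

section Cube

open Finset Fintype

lemma sqrt_expect_sq_add_expect_sq_le {α : Type*} [Fintype α] (X Y : α → ℝ) :
    √((𝔼 x, X x) ^ 2 + (𝔼 x, Y x) ^ 2) ≤ 𝔼 x, √(X x ^ 2 + Y x ^ 2) := by
  simp only [← Complex.norm_add_mul_I]
  have h : ((𝔼 x, X x : ℝ) : ℂ) + (𝔼 x, Y x : ℝ) * Complex.I
      = 𝔼 x, ((X x : ℂ) + Y x * Complex.I) := by
    rw [Complex.ofReal_expect, Complex.ofReal_expect, Finset.expect_mul,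
      Finset.expect_add_distrib]
  exact h ▸ RCLike.norm_expect_le (K := ℂ)

lemma expect_finCons {n : ℕ} (F : (Fin (n + 1) → Bool) → ℝ) :
    𝔼 x, F x = (𝔼 y, F (Fin.cons true y) + 𝔼 y, F (Fin.cons false y)) / 2 := by
  rw [← Fintype.expect_equiv (Fin.consEquiv fun _ ↦ Bool) (fun p ↦ F (Fin.cons p.1 p.2)) F
    (fun _ ↦ rfl), ← Finset.univ_product_univ, Finset.expect_product]
  simp [Finset.expect_eq_sum_div_card]

lemma expect_mem_Ioo {α : Type*} [Fintype α] [Nonempty α] {f : α → ℝ} {a b : ℝ}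
    (hf : ∀ x, f x ∈ Ioo a b) : 𝔼 x, f x ∈ Ioo a b :=
  have x₀ : α := Classical.arbitrary α
  ⟨lt_expect (fun x _ ↦ (hf x).1.le) ⟨x₀, mem_univ _, (hf x₀).1⟩,
    expect_lt (fun x _ ↦ (hf x).2.le) ⟨x₀, mem_univ _, (hf x₀).2⟩⟩

/-- The discrete derivative of a function on the cube `{-1, 1}^ι` in the direction `i`, where
`true` and `false` encode the signs `1` and `-1`. -/
noncomputable def cubeDeriv {ι : Type*} [DecidableEq ι] (f : (ι → Bool) → ℝ) (i : ι)
    (x : ι → Bool) : ℝ :=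
  (f (Function.update x i true) - f (Function.update x i false)) / 2

lemma gaussianProfile_expect_fin_le {n : ℕ} (f : (Fin n → Bool) → ℝ)
    (hf : ∀ x, f x ∈ Ioo (0 : ℝ) 1) :
    gaussianProfile (𝔼 x, f x) ≤ 𝔼 x, √(gaussianProfile (f x) ^ 2 + ∑ i, cubeDeriv f i x ^ 2) := by
  induction n with
  | zero => simp [sqrt_sq (gaussianProfile_pos _).le]
  | succ n ih =>
    have hface (b : Bool) :
        √(gaussianProfile (𝔼 y, f (Fin.cons b y)) ^ 2 +
          ((𝔼 y, f (Fin.cons true y) - 𝔼 y, f (Fin.cons false y)) / 2) ^ 2) ≤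
        𝔼 y, √(gaussianProfile (f (Fin.cons b y)) ^ 2 + ∑ i, cubeDeriv f i (Fin.cons b y) ^ 2) := by
      rw [← Finset.expect_sub_distrib, Finset.expect_div]
      refine (sqrt_le_sqrt (add_le_add_left (pow_le_pow_left₀ (gaussianProfile_pos _).le
        (ih (fun y ↦ f (Fin.cons b y)) fun y ↦ hf _) 2) _)).trans
        ((sqrt_expect_sq_add_expect_sq_le _ _).trans_eq ?_)
      refine Finset.expect_congr rfl fun y _ ↦ ?_
      rw [sq_sqrt (by positivity), Fin.sum_univ_succ]
      simp only [cubeDeriv, Fin.update_cons_zero, Fin.cons_update]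
      congr 1
      ring
    rw [expect_finCons f, expect_finCons]
    linarith [hface true, hface false, two_mul_gaussianProfile_midpoint_le
      (expect_mem_Ioo fun y ↦ hf (Fin.cons true y)) (expect_mem_Ioo fun y ↦ hf (Fin.cons false y))]

lemma gaussianProfile_expect_le {ι : Type*} [Fintype ι] [DecidableEq ι] (f : (ι → Bool) → ℝ)
    (hf : ∀ x, f x ∈ Ioo (0 : ℝ) 1) :
    gaussianProfile (𝔼 x, f x) ≤ 𝔼 x, √(gaussianProfile (f x) ^ 2 + ∑ i, cubeDeriv f i x ^ 2) := by
  let e : (ι → Bool) ≃ (Fin (card ι) → Bool) := (equivFin ι).arrowCongr (.refl Bool)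
  have hderiv (x : ι → Bool) (i : ι) :
      cubeDeriv (fun y ↦ f (e.symm y)) (equivFin ι i) (e x) = cubeDeriv f i x := by
    have hupdate (b : Bool) :
        e.symm (Function.update (e x) (equivFin ι i) b) = Function.update x i b :=
      (Equiv.symm_apply_eq e).2 ((Function.update_comp_equiv x (equivFin ι).symm i b).symm)
    simp only [cubeDeriv, hupdate]
  have h := gaussianProfile_expect_fin_le (fun y ↦ f (e.symm y)) fun y ↦ hf _
  rw [← Fintype.expect_equiv e f (fun y ↦ f (e.symm y)) (fun x ↦ by simp),
    ← Fintype.expect_equiv e _ _ (fun x ↦ rfl)] at h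
  simpa only [← (equivFin ι).sum_comp, hderiv, Equiv.symm_apply_apply] using h

end Cube

/-! ### Gaussian approximation by random walks -/

section RandomWalk

/-- The law of a fair coin toss. -/
noncomputable abbrev fairCoin : Measure Bool := (PMF.uniformOfFintype Bool).toMeasure

/-- The sign encoded by a Boolean, as in `cubeDeriv`. -/
def boolSign (b : Bool) : ℝ := if b then 1 else -1

lemma integral_fairCoin (g : Bool → ℝ) : ∫ b, g b ∂fairCoin = (g true + g false) / 2 := by
  rw [PMF.integral_eq_sum]
  simp
  ring

lemma integral_pi_fairCoin {ι : Type*} [Fintype ι] [DecidableEq ι] (F : (ι → Bool) → ℝ) :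
    ∫ x, F x ∂(Measure.pi fun _ ↦ fairCoin) = 𝔼 x, F x := by
  rw [integral_fintype .of_finite, Fintype.expect_eq_sum_div_card, Finset.sum_div]
  refine Finset.sum_congr rfl fun x _ ↦ ?_
  simp [Measure.real, Measure.pi_singleton, div_eq_inv_mul]

variable {E : Type*} [NormedAddCommGroup E] [InnerProductSpace ℝ E] [MeasurableSpace E]
  [BorelSpace E]

lemma charFun_map_smul_const {Ω : Type*} [MeasurableSpace Ω] {P : Measure Ω} {X : Ω → ℝ}
    (hX : AEMeasurable X P) (v t : E) :
    charFun (P.map fun ω ↦ X ω • v) t = charFun (P.map X) ⟪v, t⟫_ℝ := by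
  have hXv : AEMeasurable (fun ω ↦ X ω • v) P :=
    (by fun_prop : Measurable fun r : ℝ ↦ r • v).comp_aemeasurable hX
  rw [charFun_apply, charFun_apply, integral_map hXv (by fun_prop), integral_map hX (by fun_prop)]
  simp [real_inner_smul_left, mul_comm]

variable {ι : Type*} [Fintype ι]

/-- The endpoint of the random walk in `E` which makes `m` independent steps of length `1 / √m` in
each of the directions `b i`, the signs of the steps being the coordinates of `x`. -/
noncomputable def randomWalk (b : ι → E) (m : ℕ) (x : ι × Fin m → Bool) : E :=
  ∑ p, ((√m)⁻¹ * boolSign (x p)) • b p.1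

variable [FiniteDimensional ℝ E]

lemma charFun_map_randomWalk (b : ι → E) (m : ℕ) (t : E) :
    charFun ((Measure.pi fun _ ↦ fairCoin).map (randomWalk b m)) t =
      ∏ i, charFun (fairCoin.map boolSign) ((√m)⁻¹ * ⟪b i, t⟫_ℝ) ^ m := by
  have hindep : iIndepFun
      (fun (p : ι × Fin m) (x : ι × Fin m → Bool) ↦ ((√m)⁻¹ * boolSign (x p)) • b p.1)
      (Measure.pi fun _ ↦ fairCoin) :=
    iIndepFun_pi (X := fun (p : ι × Fin m) c ↦ ((√m)⁻¹ * boolSign c) • b p.1)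
      fun _ ↦ (measurable_of_finite _).aemeasurable
  have hstep (p : ι × Fin m) :
      charFun ((Measure.pi fun _ : ι × Fin m ↦ fairCoin).map
        fun x ↦ ((√m)⁻¹ * boolSign (x p)) • b p.1) t =
      charFun (fairCoin.map boolSign) ((√m)⁻¹ * ⟪b p.1, t⟫_ℝ) := by
    rw [charFun_map_smul_const (measurable_of_finite _).aemeasurable,
      charFun_map_mul_comp (measurable_of_finite _).aemeasurable]
    have heval := measurePreserving_eval (fun _ : ι × Fin m ↦ fairCoin) p
    rw [← heval.map_eq, Measure.map_map (measurable_of_finite _) heval.measurable, heval.map_eq]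
    rfl
  change charFun ((Measure.pi fun _ ↦ fairCoin).map
    fun x ↦ ∑ p : ι × Fin m, ((√m)⁻¹ * boolSign (x p)) • b p.1) t = _
  rw [hindep.charFun_map_fun_sum_eq_prod fun _ ↦ (measurable_of_finite _).aemeasurable]
  simp only [Finset.prod_apply, hstep, Fintype.prod_prod_type, Finset.prod_const,
    Finset.card_univ, Fintype.card_fin]

lemma tendsto_charFun_randomWalk (b : OrthonormalBasis ι ℝ E) (t : E) :
    Tendsto (fun m ↦ charFun ((Measure.pi fun _ ↦ fairCoin).map (randomWalk b m)) t) atTop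
      (𝓝 (charFun (stdGaussian E) t)) := by
  have hcoord (i : ι) := tendsto_charFun_inv_sqrt_mul_pow (P := fairCoin) (X := boolSign)
    (measurable_of_finite _).aemeasurable (by simp [integral_fairCoin, boolSign])
    (by simp only [Pi.pow_apply, integral_fairCoin, boolSign]; norm_num) ⟪b i, t⟫_ℝ
  simp only [charFun_map_randomWalk]
  convert tendsto_finsetProd Finset.univ fun i _ ↦ hcoord i using 2
  rw [charFun_stdGaussian, ← Complex.exp_sum, ← Finset.sum_div, Finset.sum_neg_distrib,
    ← Complex.ofReal_pow, ← b.sum_sq_inner_right]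
  simp

lemma tendsto_expect_randomWalk [DecidableEq ι] (b : OrthonormalBasis ι ℝ E) (F : E →ᵇ ℝ) :
    Tendsto (fun m ↦ 𝔼 x, F (randomWalk b m x)) atTop (𝓝 (∫ z, F z ∂stdGaussian E)) := by
  have hwalk (m : ℕ) : Measurable (randomWalk b m) := measurable_of_finite _
  let law (m : ℕ) : ProbabilityMeasure E :=
    ⟨(Measure.pi fun _ ↦ fairCoin).map (randomWalk b m),
      Measure.isProbabilityMeasure_map (hwalk m).aemeasurable⟩
  have hlaw : Tendsto law atTop (𝓝 ⟨stdGaussian E, inferInstance⟩) :=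
    ProbabilityMeasure.tendsto_iff_tendsto_charFun.2 (tendsto_charFun_randomWalk b)
  refine (ProbabilityMeasure.tendsto_iff_forall_integral_tendsto.1 hlaw F).congr fun m ↦ ?_
  exact (integral_map (hwalk m).aemeasurable F.continuous.aestronglyMeasurable).trans
    (integral_pi_fairCoin _)

end RandomWalk

/-! ### Bobkov's functional inequality for the Gaussian measure -/

section BallSup

variable {E : Type*} [NormedAddCommGroup E] {g : E → ℝ} {r : ℝ}

/-- The supremum of `g` over the closed ball of radius `r` about `z`, written over the fixed ball
about `0` so that it depends continuously on `z`. -/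
noncomputable def ballSup (g : E → ℝ) (r : ℝ) (z : E) : ℝ :=
  sSup ((fun h ↦ g (z + h)) '' closedBall 0 r)

lemma ballSup_le {z : E} {C : ℝ} (hr : 0 ≤ r) (hC : ∀ w ∈ closedBall z r, g w ≤ C) :
    ballSup g r z ≤ C := by
  refine csSup_le ((nonempty_closedBall.2 hr).image _) ?_
  rintro _ ⟨h, hh, rfl⟩
  exact hC _ (by simpa using hh)

variable [ProperSpace E]

lemma le_ballSup (hg : Continuous g) {z w : E} (hw : w ∈ closedBall z r) :
    g w ≤ ballSup g r z :=
  le_csSup ((isCompact_closedBall 0 r).bddAbove_image (by fun_prop))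
    ⟨w - z, by simpa [dist_eq_norm] using hw, by simp⟩

lemma continuous_ballSup (hg : Continuous g) (r : ℝ) : Continuous (ballSup g r) :=
  (isCompact_closedBall 0 r).continuous_sSup (f := fun z h ↦ g (z + h))
    (by simp only [Function.HasUncurry.uncurry, id]; fun_prop)

lemma tendsto_ballSup (hg : Continuous g) (z : E) :
    Tendsto (fun r ↦ ballSup g r z) (𝓝[>] 0) (𝓝 (g z)) := by
  refine tendsto_order.2 ⟨fun a ha ↦ ?_, fun a ha ↦ ?_⟩
  · filter_upwards [self_mem_nhdsWithin] with r hr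
    exact ha.trans_le (le_ballSup hg (mem_closedBall_self (mem_Ioi.1 hr).le))
  · obtain ⟨c, hzc, hca⟩ := exists_between ha
    obtain ⟨δ, hδ, hball⟩ :=
      Metric.eventually_nhds_iff_ball.1 (hg.continuousAt.eventually_lt_const hzc)
    filter_upwards [Ioo_mem_nhdsGT hδ] with r hr
    exact (ballSup_le hr.1.le fun w hw ↦
      (hball w (closedBall_subset_ball hr.2 hw)).le).trans_lt hca

end BallSup

section Bobkov

lemma integral_mem_Ioo {Ω : Type*} [MeasurableSpace Ω] {μ : Measure Ω} [IsProbabilityMeasure μ]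
    {f : Ω → ℝ} {a b : ℝ} (hf : ∀ z, f z ∈ Ioo a b) (hint : Integrable f μ) :
    ∫ z, f z ∂μ ∈ Ioo a b := by
  obtain ⟨x, hx⟩ := exists_le_integral hint
  obtain ⟨y, hy⟩ := exists_integral_le hint
  exact ⟨(hf x).1.trans_le hx, hy.trans_lt (hf y).2⟩

variable {E : Type*} [NormedAddCommGroup E] [InnerProductSpace ℝ E]
  {ι : Type*} [Fintype ι]

variable {f : E → ℝ} {C : ℝ}

lemma norm_sqrt_gaussianProfile_sq_add_ballSup_le (b : OrthonormalBasis ι ℝ E)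
    (hC : ∀ w, ‖fderiv ℝ f w‖ ≤ C) {r : ℝ} (hr : 0 ≤ r) (z : E) :
    ‖√(gaussianProfile (f z) ^ 2 + ∑ i, ballSup (fun w ↦ fderiv ℝ f w (b i) ^ 2) r z)‖ ≤
      √(φ 0 ^ 2 + Fintype.card ι * C ^ 2) := by
  have hpartial (i : ι) (w : E) : fderiv ℝ f w (b i) ^ 2 ≤ C ^ 2 := by
    rw [← sq_abs]
    gcongr
    simpa using (fderiv ℝ f w).le_of_opNorm_le (hC w) (b i)
  rw [Real.norm_eq_abs, abs_of_nonneg (sqrt_nonneg _)]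
  gcongr
  · exact (gaussianProfile_pos _).le
  · exact gaussianProfile_le _
  · refine (Finset.sum_le_sum fun i _ ↦ ballSup_le hr fun w _ ↦ hpartial i w).trans_eq ?_
    simp

lemma randomWalk_update [DecidableEq ι] (b : ι → E) (m : ℕ) (x : ι × Fin m → Bool)
    (p : ι × Fin m) (c : Bool) :
    randomWalk b m (Function.update x p c) =
      randomWalk b m x + ((√m)⁻¹ * (boolSign c - boolSign (x p))) • b p.1 := by
  rw [← sub_eq_iff_eq_add', randomWalk, randomWalk, ← Finset.sum_sub_distrib,
    Finset.sum_eq_single p (fun q _ hq ↦ by simp [hq]) (by simp), Function.update_self,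
    ← sub_smul, mul_sub]

lemma randomWalk_update_mem_closedBall [DecidableEq ι] (b : OrthonormalBasis ι ℝ E) (m : ℕ)
    (x : ι × Fin m → Bool) (p : ι × Fin m) (c : Bool) :
    randomWalk b m (Function.update x p c) ∈ closedBall (randomWalk b m x) (2 / √m) := by
  have hsign : |boolSign c - boolSign (x p)| ≤ 2 := by
    cases c <;> cases x p <;> norm_num [boolSign]
  rw [mem_closedBall, dist_eq_norm, randomWalk_update, add_sub_cancel_left, norm_smul,
    b.norm_eq_one, mul_one, norm_mul, Real.norm_eq_abs, abs_of_nonneg (by positivity),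
    Real.norm_eq_abs, div_eq_inv_mul]
  gcongr

variable [FiniteDimensional ℝ E]

lemma continuous_sqrt_gaussianProfile_sq_add_ballSup (b : OrthonormalBasis ι ℝ E)
    (hf : ContDiff ℝ 1 f) (hf01 : ∀ z, f z ∈ Ioo (0 : ℝ) 1) (r : ℝ) :
    Continuous fun z ↦ √(gaussianProfile (f z) ^ 2 +
      ∑ i, ballSup (fun w ↦ fderiv ℝ f w (b i) ^ 2) r z) :=
  (((continuousOn_gaussianProfile.comp_continuous hf.continuous hf01).pow 2).add <|
    continuous_finsetSum _ fun _ _ ↦ continuous_ballSup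
      (((hf.continuous_fderiv one_ne_zero).clm_apply continuous_const).pow 2) r).sqrt

lemma cubeDeriv_randomWalk_sq_le [DecidableEq ι] (b : OrthonormalBasis ι ℝ E)
    (hf : ContDiff ℝ 1 f) {m : ℕ} {r : ℝ} (hr : 2 / √m ≤ r) (x : ι × Fin m → Bool)
    (p : ι × Fin m) :
    cubeDeriv (fun y ↦ f (randomWalk b m y)) p x ^ 2 ≤
      (m : ℝ)⁻¹ * ballSup (fun z ↦ fderiv ℝ f z (b p.1) ^ 2) r (randomWalk b m x) := by
  have hmem (c : Bool) : randomWalk b m (Function.update x p c) ∈ closedBall (randomWalk b m x) r :=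
    closedBall_subset_closedBall hr (randomWalk_update_mem_closedBall b m x p c)
  obtain ⟨w, hw, hmvt⟩ := domain_mvt
    (fun z _ ↦ (hf.differentiable one_ne_zero z).hasFDerivAt.hasFDerivWithinAt)
    (convex_closedBall _ r) (hmem false) (hmem true)
  have hstep : randomWalk b m (Function.update x p true) -
      randomWalk b m (Function.update x p false) = (2 * (√m)⁻¹) • b p.1 := by
    rw [randomWalk_update, randomWalk_update, add_sub_add_left_eq_sub, ← sub_smul]
    congr 1
    simp only [boolSign]
    norm_num
    ring
  rw [hstep, map_smul, smul_eq_mul] at hmvt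
  have hcube : cubeDeriv (fun y ↦ f (randomWalk b m y)) p x ^ 2 =
      (m : ℝ)⁻¹ * fderiv ℝ f w (b p.1) ^ 2 := by
    rw [cubeDeriv, hmvt, mul_assoc, mul_div_cancel_left₀ _ two_ne_zero, mul_pow, inv_pow,
      sq_sqrt m.cast_nonneg]
  rw [hcube]
  gcongr
  exact le_ballSup (((hf.continuous_fderiv one_ne_zero).clm_apply continuous_const).pow 2)
    ((convex_closedBall _ r).segment_subset (hmem false) (hmem true) hw)

lemma gaussianProfile_expect_randomWalk_le [DecidableEq ι] (b : OrthonormalBasis ι ℝ E)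
    (hf : ContDiff ℝ 1 f) (hf01 : ∀ z, f z ∈ Ioo (0 : ℝ) 1) {m : ℕ} (hm : m ≠ 0) {r : ℝ}
    (hr : 2 / √m ≤ r) :
    gaussianProfile (𝔼 x, f (randomWalk b m x)) ≤
      𝔼 x, √(gaussianProfile (f (randomWalk b m x)) ^ 2 +
        ∑ i, ballSup (fun z ↦ fderiv ℝ f z (b i) ^ 2) r (randomWalk b m x)) := by
  refine (gaussianProfile_expect_le _ fun x ↦ hf01 _).trans
    (Finset.expect_le_expect fun x _ ↦ ?_)
  gcongr
  refine (Finset.sum_le_sum fun p _ ↦ cubeDeriv_randomWalk_sq_le b hf hr x p).trans_eq ?_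
  simp [Fintype.sum_prod_type, hm]

variable [MeasurableSpace E] [BorelSpace E]

lemma gaussianProfile_integral_le_ballSup (b : OrthonormalBasis ι ℝ E) (hf : ContDiff ℝ 1 f)
    (hC : ∀ w, ‖fderiv ℝ f w‖ ≤ C) (hf01 : ∀ z, f z ∈ Ioo (0 : ℝ) 1) {r : ℝ} (hr : 0 < r) :
    gaussianProfile (∫ z, f z ∂stdGaussian E) ≤
      ∫ z, √(gaussianProfile (f z) ^ 2 +
        ∑ i, ballSup (fun w ↦ fderiv ℝ f w (b i) ^ 2) r z) ∂stdGaussian E := by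
  classical
  have hf1 (z : E) : ‖f z‖ ≤ 1 := abs_le.2 ⟨by linarith [(hf01 z).1], (hf01 z).2.le⟩
  have hmem : ∫ z, f z ∂stdGaussian E ∈ Ioo (0 : ℝ) 1 :=
    integral_mem_Ioo hf01 (.of_bound hf.continuous.aestronglyMeasurable 1 (.of_forall hf1))
  have hleft := (continuousOn_gaussianProfile.continuousAt (isOpen_Ioo.mem_nhds hmem)).tendsto.comp
    (tendsto_expect_randomWalk b (.ofNormedAddCommGroup f hf.continuous 1 hf1))
  have hright := tendsto_expect_randomWalk b (.ofNormedAddCommGroup _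
    (continuous_sqrt_gaussianProfile_sq_add_ballSup b hf hf01 r) _
    (norm_sqrt_gaussianProfile_sq_add_ballSup_le b hC hr.le))
  refine le_of_tendsto_of_tendsto hleft hright ?_
  have hstep : Tendsto (fun m : ℕ ↦ 2 / √m) atTop (𝓝 0) :=
    (tendsto_sqrt_atTop.comp tendsto_natCast_atTop_atTop).const_div_atTop 2
  filter_upwards [hstep.eventually_le_const hr, eventually_ne_atTop 0] with m hmr hm
  exact gaussianProfile_expect_randomWalk_le b hf hf01 hm hmr

lemma gaussianProfile_integral_le (hf : ContDiff ℝ 1 f) (hC : ∀ w, ‖fderiv ℝ f w‖ ≤ C)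
    (hf01 : ∀ z, f z ∈ Ioo (0 : ℝ) 1) :
    gaussianProfile (∫ z, f z ∂stdGaussian E) ≤
      ∫ z, √(gaussianProfile (f z) ^ 2 + ‖fderiv ℝ f z‖ ^ 2) ∂stdGaussian E := by
  let b := stdOrthonormalBasis ℝ E
  have hlim := tendsto_integral_filter_of_dominated_convergence (μ := stdGaussian E)
    (l := 𝓝[>] (0 : ℝ))
    (F := fun r z ↦ √(gaussianProfile (f z) ^ 2 +
      ∑ i, ballSup (fun w ↦ fderiv ℝ f w (b i) ^ 2) r z))
    (f := fun z ↦ √(gaussianProfile (f z) ^ 2 + ‖fderiv ℝ f z‖ ^ 2)) _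
    (.of_forall fun r ↦
      (continuous_sqrt_gaussianProfile_sq_add_ballSup b hf hf01 r).aestronglyMeasurable)
    (eventually_mem_nhdsWithin.mono fun r hr ↦
      .of_forall (norm_sqrt_gaussianProfile_sq_add_ballSup_le b hC (mem_Ioi.1 hr).le))
    (integrable_const _) (.of_forall fun z ↦ ?_)
  · exact ge_of_tendsto hlim (eventually_mem_nhdsWithin.mono fun r hr ↦
      gaussianProfile_integral_le_ballSup b hf hC hf01 hr)
  · rw [b.norm_dual]
    exact ((tendsto_finsetSum _ fun i _ ↦ tendsto_ballSup
      (((hf.continuous_fderiv one_ne_zero).clm_apply continuous_const).pow 2) z).const_add _).sqrt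

end Bobkov

/-! ### Smoothed distribution functions -/

section SmoothedCDF

lemma integrable_Phi_comp {Ω : Type*} [MeasurableSpace Ω] {μ : Measure Ω} [IsFiniteMeasure μ]
    {g : Ω → ℝ} (hg : Measurable g) : Integrable (fun z ↦ Phi (g z)) μ :=
  .of_bound (continuous_Phi.measurable.comp hg).aestronglyMeasurable 1 <| .of_forall fun z ↦
    (abs_of_pos (Phi_mem_Ioo (g z)).1).trans_le (Phi_mem_Ioo (g z)).2.le

/-- The distribution function `s ↦ μ {D ≤ s}` of `D`, with the indicator of `{D ≤ s}` smoothed to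
`Phi (l * (s - D))`, that is, over a width of order `1 / l`. -/
noncomputable def smoothedCDF {Ω : Type*} [MeasurableSpace Ω] (μ : Measure Ω) (D : Ω → ℝ)
    (l s : ℝ) : ℝ :=
  ∫ z, Phi (l * (s - D z)) ∂μ

section General

variable {Ω : Type*} [MeasurableSpace Ω] {μ : Measure Ω} {D : Ω → ℝ} {l : ℝ}

lemma smoothedCDF_mem_Ioo [IsProbabilityMeasure μ] (hD : Measurable D) (l s : ℝ) :
    smoothedCDF μ D l s ∈ Ioo (0 : ℝ) 1 :=
  integral_mem_Ioo (fun _ ↦ Phi_mem_Ioo _) (integrable_Phi_comp (by fun_prop))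

lemma hasDerivAt_smoothedCDF [IsFiniteMeasure μ] (hD : Measurable D) (l s : ℝ) :
    HasDerivAt (smoothedCDF μ D l) (∫ z, l * φ (l * (s - D z)) ∂μ) s := by
  have := measurable_gaussianPDFReal 0 1
  refine (hasDerivAt_integral_of_dominated_loc_of_deriv_le (s := univ)
    (F := fun s z ↦ Phi (l * (s - D z))) (F' := fun s z ↦ l * φ (l * (s - D z)))
    (bound := fun _ ↦ |l| * φ 0) univ_mem
    (.of_forall fun s ↦ (integrable_Phi_comp (by fun_prop)).aestronglyMeasurable)
    (integrable_Phi_comp (by fun_prop)) (Measurable.aestronglyMeasurable (by fun_prop))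
    (.of_forall fun z t _ ↦ ?_) (integrable_const _) (.of_forall fun z t _ ↦ ?_)).2
  · rw [norm_mul, Real.norm_eq_abs, Real.norm_eq_abs, abs_of_nonneg (gaussianPDFReal_nonneg _ _ _)]
    exact mul_le_mul_of_nonneg_left (gaussianPDFReal_le_mean 0 1 _) (abs_nonneg l)
  · convert! (hasDerivAt_Phi (l * (t - D z))).comp t
      (((hasDerivAt_id t).sub_const (D z)).const_mul l) using 1
    rw [mul_one, mul_comm]

lemma measureReal_mul_Phi_le_smoothedCDF [IsFiniteMeasure μ] (hD : Measurable D) {A : Set Ω}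
    (hA : MeasurableSet A) {r s : ℝ} (hl : 0 ≤ l) (hr : ∀ z ∈ A, D z + r ≤ s) :
    μ.real A * Phi (l * r) ≤ smoothedCDF μ D l s := by
  rw [← smul_eq_mul, ← integral_indicator_const _ hA]
  refine integral_mono ((integrable_const _).indicator hA) (integrable_Phi_comp (by fun_prop))
    fun z ↦ indicator_le' (f := fun _ ↦ Phi (l * r)) (g := fun z ↦ Phi (l * (s - D z)))
      (fun z hz ↦ strictMono_Phi.monotone ?_) (fun z _ ↦ (Phi_mem_Ioo _).1.le) z
  gcongr
  linarith [hr z hz]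

lemma smoothedCDF_le_measureReal_add [IsProbabilityMeasure μ] (hD : Measurable D) {A : Set Ω}
    (hA : MeasurableSet A) {r s : ℝ} (hl : 0 ≤ l) (hr : ∀ z ∉ A, s + r ≤ D z) :
    smoothedCDF μ D l s ≤ μ.real A + Phi (-(l * r)) := by
  have hlow := measureReal_mul_Phi_le_smoothedCDF (μ := μ) (D := fun z ↦ -D z) (r := r) (s := -s)
    (by fun_prop) hA.compl hl fun z hz ↦ by linarith [hr z hz]
  have hcompl : smoothedCDF μ (fun z ↦ -D z) l (-s) = 1 - smoothedCDF μ D l s := by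
    rw [smoothedCDF, smoothedCDF, eq_sub_iff_add_eq, ← integral_add
      (integrable_Phi_comp (by fun_prop)) (integrable_Phi_comp (by fun_prop))]
    have (z : Ω) : Phi (l * (-s - -D z)) + Phi (l * (s - D z)) = 1 := by
      rw [show l * (-s - -D z) = -(l * (s - D z)) by ring, Phi_neg, sub_add_cancel]
    simp only [this, integral_const, probReal_univ, one_smul]
  rw [hcompl, probReal_compl_eq_one_sub hA] at hlow
  rw [Phi_neg]
  nlinarith [measureReal_nonneg (μ := μ) (s := A), (Phi_mem_Ioo (l * r)).2]

end General

variable {E : Type*} [NormedAddCommGroup E] [InnerProductSpace ℝ E] {D : E → ℝ} {l : ℝ}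

lemma norm_fderiv_Phi_comp_le (hD : Differentiable ℝ D) (hL : LipschitzWith 1 D) (hl : 0 ≤ l)
    (s : ℝ) (z : E) :
    ‖fderiv ℝ (fun z ↦ Phi (l * (s - D z))) z‖ ≤ l * φ (l * (s - D z)) := by
  have h := (hasDerivAt_Phi (l * (s - D z))).comp_hasFDerivAt z
    (((hD z).hasFDerivAt.const_sub s).const_mul l)
  have hφ := gaussianPDFReal_nonneg 0 1 (l * (s - D z))
  change ‖fderiv ℝ (Phi ∘ fun z ↦ l * (s - D z)) z‖ ≤ _
  rw [h.fderiv, norm_smul, norm_smul, norm_neg, Real.norm_eq_abs, Real.norm_eq_abs,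
    abs_of_nonneg hφ, abs_of_nonneg hl, mul_left_comm, ← mul_assoc]
  exact mul_le_of_le_one_right (by positivity) (by simpa using norm_fderiv_le_of_lipschitz ℝ hL)

variable [FiniteDimensional ℝ E] [MeasurableSpace E] [BorelSpace E]

lemma gaussianProfile_smoothedCDF_le (hD : ContDiff ℝ 1 D) (hL : LipschitzWith 1 D) (hl : 0 ≤ l)
    (s : ℝ) :
    gaussianProfile (smoothedCDF (stdGaussian E) D l s) ≤
      √(1 + l ^ 2) * ∫ z, φ (l * (s - D z)) ∂stdGaussian E := by
  have hφ := continuous_gaussianPDFReal 0 1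
  have hDc := hD.continuous
  have hgrad := norm_fderiv_Phi_comp_le (hD.differentiable one_ne_zero) hL hl s
  have hbound (z : E) : ‖fderiv ℝ (fun z ↦ Phi (l * (s - D z))) z‖ ≤ l * φ 0 :=
    (hgrad z).trans (mul_le_mul_of_nonneg_left (gaussianPDFReal_le_mean 0 1 _) hl)
  have hint : Integrable (fun z ↦ √(1 + l ^ 2) * φ (l * (s - D z))) (stdGaussian E) :=
    .const_mul (.of_bound (by fun_prop) (φ 0) (.of_forall fun z ↦
      (abs_of_pos (gaussianPDFReal_zero_one_pos _)).trans_le (gaussianPDFReal_le_mean 0 1 _))) _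
  refine (gaussianProfile_integral_le (contDiff_one_Phi.comp (by fun_prop)) hbound
    fun z ↦ Phi_mem_Ioo _).trans ?_
  rw [← integral_const_mul]
  refine integral_mono_of_nonneg (.of_forall fun z ↦ sqrt_nonneg _) hint (.of_forall fun z ↦ ?_)
  calc √(gaussianProfile (Phi (l * (s - D z))) ^ 2 +
        ‖fderiv ℝ (fun z ↦ Phi (l * (s - D z))) z‖ ^ 2)
      ≤ √(φ (l * (s - D z)) ^ 2 + (l * φ (l * (s - D z))) ^ 2) := by
        rw [gaussianProfile_Phi]
        gcongr
        exact hgrad z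
    _ = √(1 + l ^ 2) * φ (l * (s - D z)) := by
        rw [mul_pow, ← one_add_mul, sqrt_mul (by positivity),
          sqrt_sq (gaussianPDFReal_nonneg _ _ _)]

lemma PhiInv_smoothedCDF_add_le (hD : ContDiff ℝ 1 D) (hL : LipschitzWith 1 D) (hl : 0 ≤ l)
    {s t : ℝ} (hst : s ≤ t) :
    PhiInv (smoothedCDF (stdGaussian E) D l s) + l / √(1 + l ^ 2) * (t - s) ≤
      PhiInv (smoothedCDF (stdGaussian E) D l t) := by
  have hder (s : ℝ) :=
    (hasDerivAt_PhiInv (smoothedCDF_mem_Ioo (μ := stdGaussian E) hD.continuous.measurable l s)).comp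
      s (hasDerivAt_smoothedCDF hD.continuous.measurable l s)
  have hslope (s : ℝ) :
      l / √(1 + l ^ 2) ≤ deriv (PhiInv ∘ smoothedCDF (stdGaussian E) D l) s := by
    rw [(hder s).deriv, integral_const_mul, ← gaussianProfile, inv_mul_eq_div,
      div_le_div_iff₀ (by positivity) (gaussianProfile_pos _)]
    linarith [mul_le_mul_of_nonneg_left (gaussianProfile_smoothedCDF_le hD hL hl s) hl]
  have := mul_sub_le_image_sub_of_le_deriv (fun s ↦ (hder s).differentiableAt) hslope hst
  simp only [Function.comp_apply] at this
  linarith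

end SmoothedCDF

/-! ### Mollification -/

section Mollification

open scoped Convolution ContDiff

variable {E F : Type*} [NormedAddCommGroup E] [NormedSpace ℝ E] [FiniteDimensional ℝ E]
  [MeasurableSpace E] [BorelSpace E] [NormedAddCommGroup F] [NormedSpace ℝ F] {f : E → F} {K : ℝ≥0}

lemma lipschitzWith_normed_convolution (χ : ContDiffBump (0 : E)) {μ : Measure E}
    [μ.IsAddHaarMeasure] (hf : LipschitzWith K f) :
    LipschitzWith K (χ.normed μ ⋆[ContinuousLinearMap.lsmul ℝ ℝ, μ] f) := by
  have hint (x : E) : Integrable (fun t ↦ χ.normed μ t • f (x - t)) μ :=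
    χ.hasCompactSupport_normed.convolutionExists_left_of_continuous_right
      (ContinuousLinearMap.lsmul ℝ ℝ) χ.continuous_normed.locallyIntegrable hf.continuous x
  refine .of_dist_le_mul fun x y ↦ ?_
  calc dist _ _ = ‖∫ t, χ.normed μ t • (f (x - t) - f (y - t)) ∂μ‖ := by
        simp_rw [dist_eq_norm, smul_sub, integral_sub (hint x) (hint y)]
        rfl
    _ ≤ ∫ t, χ.normed μ t * (K * dist x y) ∂μ := by
        refine norm_integral_le_of_norm_le (χ.integrable_normed.mul_const _) (.of_forall fun t ↦ ?_)
        rw [norm_smul, Real.norm_of_nonneg (χ.nonneg_normed t), ← dist_eq_norm]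
        gcongr
        · exact χ.nonneg_normed t
        · simpa using hf.dist_le_mul (x - t) (y - t)
    _ = K * dist x y := by rw [integral_mul_const, χ.integral_normed, one_mul]

lemma exists_contDiff_lipschitzWith_dist_le [CompleteSpace F] (n : ℕ∞) (hf : LipschitzWith K f)
    {θ : ℝ} (hθ : 0 < θ) :
    ∃ g : E → F, ContDiff ℝ n g ∧ LipschitzWith K g ∧ ∀ x, dist (g x) (f x) ≤ θ := by
  have hK : 0 < θ / (K + 1) := by positivity
  let χ : ContDiffBump (0 : E) := ⟨θ / (K + 1) / 2, θ / (K + 1), half_pos hK, half_lt_self hK⟩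
  refine ⟨χ.normed .addHaar ⋆[ContinuousLinearMap.lsmul ℝ ℝ, .addHaar] f,
    χ.hasCompactSupport_normed.contDiff_convolution_left _ χ.contDiff_normed
      hf.continuous.locallyIntegrable, lipschitzWith_normed_convolution χ hf,
    fun x ↦ χ.dist_normed_convolution_le hf.continuous.aestronglyMeasurable fun y hy ↦ ?_⟩
  calc dist (f y) (f x) ≤ K * dist y x := hf.dist_le_mul y x
    _ ≤ (K + 1) * (θ / (K + 1)) := by
        gcongr
        · exact le_add_of_nonneg_right zero_le_one
        · exact (mem_ball.1 hy).le
    _ = θ := by field_simp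

end Mollification

/-! ### The Gaussian isoperimetric inequality -/

section Isoperimetry

lemma tendsto_div_sqrt_one_add_sq : Tendsto (fun l : ℝ ↦ l / √(1 + l ^ 2)) atTop (𝓝 1) := by
  have h : Tendsto (fun l : ℝ ↦ (√(l⁻¹ ^ 2 + 1))⁻¹) atTop (𝓝 1) := by
    simpa using (((tendsto_inv_atTop_zero (𝕜 := ℝ)).pow 2).add_const 1).sqrt.inv₀ (by simp)
  refine h.congr' ?_
  filter_upwards [eventually_gt_atTop 0] with l hl
  rw [show l⁻¹ ^ 2 + 1 = (1 + l ^ 2) / l ^ 2 by field_simp, sqrt_div (by positivity),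
    sqrt_sq hl.le, inv_div]

variable {E : Type*} [NormedAddCommGroup E] [InnerProductSpace ℝ E] [FiniteDimensional ℝ E]
  [MeasurableSpace E] [BorelSpace E] {A : Set E} {η : ℝ}

/-- The distance to `A` is mollified with error `1 / r` and smoothed at scale `l = r ^ 2`. A margin
of `1 / r` then costs only `Phi (-r)`, and mollification and margin take `2 / r` off either end of
`[0, η]`. -/
lemma Phi_PhiInv_mul_Phi_add_le (hA : MeasurableSet A) (hpos : 0 < (stdGaussian E).real A) {r : ℝ}
    (hr : 0 < r) (hη : 4 / r ≤ η) :
    Phi (PhiInv ((stdGaussian E).real A * Phi r) +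
        r ^ 2 / √(1 + (r ^ 2) ^ 2) * (η - 4 / r)) ≤
      (stdGaussian E).real {z | infDist z A ≤ η} + Phi (-r) := by
  obtain ⟨D, hD, hDL, hdist⟩ := exists_contDiff_lipschitzWith_dist_le 1
    (lipschitz_infDist_pt A) (one_div_pos.2 hr)
  have hDm := hD.continuous.measurable
  have happrox (z : E) := abs_le.1 ((Real.dist_eq _ _).symm.trans_le (hdist z))
  have hscale : r ^ 2 * (1 / r) = r := by field_simp
  have hmem := smoothedCDF_mem_Ioo (μ := stdGaussian E) hDm (r ^ 2)
  have hlow := measureReal_mul_Phi_le_smoothedCDF (μ := stdGaussian E) hDm hA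
    (r := 1 / r) (s := 2 / r) (sq_nonneg r) fun z hz ↦ by
      linarith [happrox z, infDist_zero_of_mem hz, add_div 1 1 r]
  have hupp := smoothedCDF_le_measureReal_add (μ := stdGaussian E) hDm
    (A := {z | infDist z A ≤ η}) (measurableSet_le (by fun_prop) measurable_const)
    (r := 1 / r) (s := η - 2 / r) (sq_nonneg r) fun z hz ↦ by
      have hz : η < infDist z A := not_le.1 hz
      linarith [happrox z, add_div 1 1 r]
  have hgrow := PhiInv_smoothedCDF_add_le hD hDL (sq_nonneg r) (s := 2 / r) (t := η - 2 / r)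
    (by linarith [add_div 2 2 r])
  rw [hscale] at hlow hupp
  calc _ ≤ Phi (PhiInv (smoothedCDF (stdGaussian E) D (r ^ 2) (η - 2 / r))) := by
        refine strictMono_Phi.monotone (le_trans ?_ hgrow)
        rw [sub_sub, ← add_div]
        norm_num only
        gcongr
        exact strictMonoOn_PhiInv.monotoneOn
          ⟨mul_pos hpos (Phi_mem_Ioo r).1, hlow.trans_lt (hmem _).2⟩ (hmem _) hlow
    _ = smoothedCDF (stdGaussian E) D (r ^ 2) (η - 2 / r) := Phi_PhiInv (hmem _)
    _ ≤ _ := hupp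

/-- Half-spaces attain equality. -/
lemma Phi_PhiInv_add_le_measureReal_infDist_le (hA : MeasurableSet A)
    (hA01 : (stdGaussian E).real A ∈ Ioo (0 : ℝ) 1) (hη : 0 ≤ η) :
    Phi (PhiInv ((stdGaussian E).real A) + η) ≤ (stdGaussian E).real {z | infDist z A ≤ η} := by
  obtain rfl | hη := hη.eq_or_lt
  · rw [add_zero, Phi_PhiInv hA01]
    exact measureReal_mono fun z hz ↦ (infDist_zero_of_mem hz).le
  have hmass : Tendsto (fun r ↦ (stdGaussian E).real A * Phi r) atTop
      (𝓝 ((stdGaussian E).real A)) := by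
    simpa using tendsto_Phi_atTop.const_mul ((stdGaussian E).real A)
  have hwidth : Tendsto (fun r : ℝ ↦ 4 / r) atTop (𝓝 0) := tendsto_const_nhds.div_atTop tendsto_id
  have hslope := tendsto_div_sqrt_one_add_sq.comp (tendsto_pow_atTop (α := ℝ) two_ne_zero)
  have hlower := continuous_Phi.continuousAt.tendsto.comp
    (((continuousAt_PhiInv hA01).tendsto.comp hmass).add (hslope.mul (hwidth.const_sub η)))
  have hupper := (tendsto_Phi_atBot.comp tendsto_neg_atTop_atBot).const_add
    ((stdGaussian E).real {z | infDist z A ≤ η})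
  rw [one_mul, sub_zero] at hlower
  rw [add_zero] at hupper
  refine le_of_tendsto_of_tendsto hlower hupper ?_
  filter_upwards [eventually_gt_atTop 0, hwidth.eventually_le_const hη] with r hr hrη
  exact Phi_PhiInv_mul_Phi_add_le hA hA01.1 hr hrη

lemma measureReal_lt_infDist_le (hA : MeasurableSet A) (hhalf : 1 / 2 ≤ (stdGaussian E).real A)
    (hη : 0 ≤ η) :
    (stdGaussian E).real {z | η < infDist z A} ≤
      exp (-η ^ 2 / 2) * (stdGaussian E).real Aᶜ := by
  have hsub : {z | η < infDist z A} ⊆ Aᶜ := fun z hz hzA ↦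
    hη.not_gt (infDist_zero_of_mem hzA ▸ hz)
  obtain hlt | hone := (measureReal_le_one (μ := stdGaussian E) (s := A)).lt_or_eq
  · have hA01 : (stdGaussian E).real A ∈ Ioo (0 : ℝ) 1 := ⟨by linarith, hlt⟩
    have hPhiInv : 0 ≤ PhiInv ((stdGaussian E).real A) :=
      strictMono_Phi.le_iff_le.1 (by rwa [Phi_zero, Phi_PhiInv hA01])
    have hmeas : MeasurableSet {z | infDist z A ≤ η} :=
      measurableSet_le (by fun_prop) measurable_const
    calc (stdGaussian E).real {z | η < infDist z A}
        = 1 - (stdGaussian E).real {z | infDist z A ≤ η} := by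
          rw [← probReal_compl_eq_one_sub hmeas]
          simp only [compl_ofPred, not_le]
      _ ≤ 1 - Phi (PhiInv ((stdGaussian E).real A) + η) :=
          sub_le_sub_left (Phi_PhiInv_add_le_measureReal_infDist_le hA hA01 hη) 1
      _ = Phi (-PhiInv ((stdGaussian E).real A) - η) := by rw [← Phi_neg, neg_add']
      _ ≤ exp (-η ^ 2 / 2) * Phi (-PhiInv ((stdGaussian E).real A)) :=
          Phi_sub_le (neg_nonpos.2 hPhiInv) hη
      _ = exp (-η ^ 2 / 2) * (stdGaussian E).real Aᶜ := by
          rw [Phi_neg, Phi_PhiInv hA01, probReal_compl_eq_one_sub hA]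
  · have hnull : (stdGaussian E).real Aᶜ = 0 := by rw [probReal_compl_eq_one_sub hA, hone, sub_self]
    rw [hnull, mul_zero, ← hnull]
    exact measureReal_mono hsub

lemma measure_lt_infDist_le (hA : MeasurableSet A) (hhalf : 1 / 2 ≤ (stdGaussian E).real A)
    (hη : 0 ≤ η) :
    stdGaussian E {z | η < infDist z A} ≤
      ENNReal.ofReal (exp (-η ^ 2 / 2)) * stdGaussian E Aᶜ := by
  rw [← ofReal_measureReal, ← ofReal_measureReal, ← ENNReal.ofReal_mul (exp_pos _).le]
  exact ENNReal.ofReal_le_ofReal (measureReal_lt_infDist_le hA hhalf hη)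

end Isoperimetry

/-! ### Balanced covers -/

section BalancedCover

variable {α ι : Type*} {B : ι → Set α}

lemma compl_subset_iUnion_ne (hcover : ⋃ i, B i = univ) (i : ι) : (B i)ᶜ ⊆ ⋃ j ≠ i, B j := by
  intro z hz
  obtain ⟨j, hj⟩ := iUnion_eq_univ_iff.1 hcover z
  exact mem_biUnion (fun hji ↦ hz (hji ▸ hj)) hj

lemma pairwise_disjoint_compl_iUnion_ne (hcover : ⋃ i, B i = univ) :
    Pairwise (Function.onFun Disjoint fun i ↦ (⋃ j ≠ i, B j)ᶜ) := by
  refine fun i k hik ↦ disjoint_left.2 fun z hzi hzk ↦ hzk ?_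
  exact mem_biUnion hik (not_not.1 fun hz ↦ hzi (compl_subset_iUnion_ne hcover i hz))

end BalancedCover

theorem partition_boundary_measure_balanced_general {E : Type*} [NormedAddCommGroup E]
    [InnerProductSpace ℝ E] [FiniteDimensional ℝ E] [MeasurableSpace E] [BorelSpace E]
    {ι : Type*} [Countable ι] {B : ι → Set E} (hmeas : ∀ i, MeasurableSet (B i))
    (hcover : ⋃ i, B i = univ) (hhalf : ∀ i, (stdGaussian E).real (B i) ≤ 1 / 2) {η : ℝ}
    (hη : 0 ≤ η) :
    1 - exp (-η ^ 2 / 2) ≤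
      (stdGaussian E).real {z | ∃ i, z ∈ B i ∧ infDist z (⋃ j ≠ i, B j) ≤ η} := by
  set S := {z | ∃ i, z ∈ B i ∧ infDist z (⋃ j ≠ i, B j) ≤ η}
  have hU (i : ι) : MeasurableSet (⋃ j ≠ i, B j) := .iUnion fun j ↦ .iUnion fun _ ↦ hmeas j
  have hUhalf (i : ι) : 1 / 2 ≤ (stdGaussian E).real (⋃ j ≠ i, B j) := by
    have := measureReal_mono (compl_subset_iUnion_ne hcover i) (measure_ne_top (stdGaussian E) _)
    rw [probReal_compl_eq_one_sub (hmeas i)] at this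
    linarith [hhalf i]
  have hsub : Sᶜ ⊆ ⋃ i, {z | η < infDist z (⋃ j ≠ i, B j)} := fun z hz ↦ by
    obtain ⟨i, hi⟩ := iUnion_eq_univ_iff.1 hcover z
    exact mem_iUnion.2 ⟨i, not_le.1 fun h ↦ hz ⟨i, hi, h⟩⟩
  have hbad : stdGaussian E Sᶜ ≤ ENNReal.ofReal (exp (-η ^ 2 / 2)) :=
    calc stdGaussian E Sᶜ ≤ ∑' i, stdGaussian E {z | η < infDist z (⋃ j ≠ i, B j)} :=
          (measure_mono hsub).trans (measure_iUnion_le _)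
      _ ≤ ∑' i, ENNReal.ofReal (exp (-η ^ 2 / 2)) * stdGaussian E (⋃ j ≠ i, B j)ᶜ :=
          ENNReal.tsum_le_tsum fun i ↦ measure_lt_infDist_le (hU i) (hUhalf i) hη
      _ = ENNReal.ofReal (exp (-η ^ 2 / 2)) * stdGaussian E (⋃ i, (⋃ j ≠ i, B j)ᶜ) := by
          rw [ENNReal.tsum_mul_left, measure_iUnion (pairwise_disjoint_compl_iUnion_ne hcover)
            fun i ↦ (hU i).compl]
      _ ≤ _ := mul_le_of_le_one_right' prob_le_one
  have hbad' : (stdGaussian E).real Sᶜ ≤ exp (-η ^ 2 / 2) :=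
    ENNReal.toReal_le_of_le_ofReal (exp_pos _).le hbad
  have htotal := measureReal_union_le (μ := stdGaussian E) S Sᶜ
  rw [union_compl_self, probReal_univ] at htotal
  linarith

/-! ### Coordinates -/

lemma real_stdGaussian_eq (d : ℕ) (A : Set (Fin d → ℝ)) :
    (stdGaussian d).real A =
      (stdGaussian (EuclideanSpace ℝ (Fin d))).real (WithLp.ofLp ⁻¹' A) := by
  rw [← map_pi_eq_stdGaussian, ← MeasurableEquiv.coe_toLp, measureReal_def, measureReal_def,
    MeasurableEquiv.map_apply]
  rfl

lemma l2_eq_norm {d : ℕ} (z : Fin d → ℝ) : l2 z = ‖WithLp.toLp 2 z‖ := by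
  simp [l2, EuclideanSpace.norm_eq]

lemma distSet_eq_infDist {d : ℕ} (z : Fin d → ℝ) (A : Set (Fin d → ℝ)) :
    distSet z A = infDist (WithLp.toLp 2 z) (WithLp.ofLp ⁻¹' A) := by
  rw [infDist_eq_iInf, iInf, distSet]
  congr 1
  ext t
  constructor
  · rintro ⟨z', hz', rfl⟩
    exact ⟨⟨WithLp.toLp 2 z', hz'⟩, by simp [dist_eq_norm, l2_eq_norm]⟩
  · rintro ⟨⟨y, hy⟩, rfl⟩
    exact ⟨y.ofLp, hy, by simp [dist_eq_norm, l2_eq_norm]⟩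

/-- If all cells of a Gaussian partition have measure at most `1/2`, then most points are
within ℓ₂-distance `η` of a different cell. -/
theorem partition_boundary_measure_balanced (d K : ℕ)
    (B : Fin K → Set (Fin d → ℝ))
    (hmeas : ∀ i, MeasurableSet (B i))
    (hdisj : Pairwise (Function.onFun Disjoint B))
    (hcover : (⋃ i, B i) = Set.univ)
    (hhalf : ∀ i, ((stdGaussian d) (B i)).toReal ≤ 1 / 2)
    (η : ℝ) (hη : 0 ≤ η) :
    ((stdGaussian d)
        {z | ∃ i, z ∈ B i ∧ distSet z (⋃ j, ⋃ _ : j ≠ i, B j) ≤ η}).toReal ≥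
      1 - Real.sqrt (π / 2) * Real.exp (-η ^ 2 / 2) := by
  have hboundary := partition_boundary_measure_balanced_general
    (B := fun i ↦ WithLp.ofLp (p := 2) ⁻¹' B i) (fun i ↦ WithLp.measurable_ofLp 2 _ (hmeas i))
    (by rw [← preimage_iUnion, hcover, preimage_univ])
    (fun i ↦ (real_stdGaussian_eq d (B i)).symm.trans_le (hhalf i)) hη
  have hexp : exp (-η ^ 2 / 2) ≤ √(π / 2) * exp (-η ^ 2 / 2) :=
    le_mul_of_one_le_left (exp_pos _).le (one_le_sqrt.2 (by linarith [two_le_pi]))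
  rw [ge_iff_le, ← measureReal_def, real_stdGaussian_eq]
  simp only [distSet_eq_infDist, preimage_iUnion, preimage_ofPred_eq, mem_preimage,
    WithLp.toLp_ofLp] at hboundary ⊢
  linarith
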